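/- arXiv:2502.13112 — 2 statements merged into one kernel-verified Lean document; each statement's English description precedes it below -/
import Mathlib

section
/- Under (A1)–(A4), suppose T ≥ 1, the initial action satisfies g(x_1) ≤ −α for some α ∈ (0, ε], and the algorithm is run with parameters ρ = α/√T and η = ξ·ρ/(G_f·G_g). Then for every point x* with g(x*) ≤ 0: ∑_{t=1}^T (f_t(x_t) − f_t(x*)) ≤ ( 2·G_f·G_g·R²/(ξ·α) + G_f·ξ·α/(2·G_g) + G_f·α/σ )·√T. -/
open scoped RealInnerProductSpace Classical

noncomputable def projBall {d : ℕ} (R : ℝ) (v : EuclideanSpace ℝ (Fin d)) :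
    EuclideanSpace ℝ (Fin d) := (R / max R ‖v‖) • v

def IsSubgradAt {d : ℕ} (g : EuclideanSpace ℝ (Fin d) → ℝ)
    (x s : EuclideanSpace ℝ (Fin d)) : Prop :=
  ∀ y, g x + ⟪s, y - x⟫ ≤ g y

theorem aux_projBall_mem {d : ℕ} {R : ℝ} (hR : 0 < R) (v : EuclideanSpace ℝ (Fin d)) :
    ‖projBall R v‖ ≤ R := by
  unfold projBall
  have hm : 0 < max R ‖v‖ := lt_max_of_lt_left hR
  rw [norm_smul, Real.norm_of_nonneg (by positivity), div_mul_eq_mul_div, div_le_iff₀ hm]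
  exact mul_le_mul_of_nonneg_left (le_max_right _ _) hR.le

theorem aux_projBall_nonexp {d : ℕ} {R : ℝ} (hR : 0 < R) (v u : EuclideanSpace ℝ (Fin d))
    (hu : ‖u‖ ≤ R) : ‖projBall R v - u‖ ^ 2 ≤ ‖v - u‖ ^ 2 := by
  unfold projBall
  rcases le_total ‖v‖ R with h | h
  · rw [max_eq_left h, div_self hR.ne', one_smul]
  · rw [max_eq_right h]
    have hv : 0 < ‖v‖ := lt_of_lt_of_le hR h
    obtain ⟨c, hc⟩ : ∃ c, c = R / ‖v‖ := ⟨_, rfl⟩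
    have hcv : c * ‖v‖ = R := by rw [hc]; field_simp
    have hc1 : c ≤ 1 := by rw [hc, div_le_one hv]; exact h
    have hc0 : 0 < c := by rw [hc]; positivity
    rw [← hc, norm_sub_sq_real, norm_sub_sq_real, norm_smul, Real.norm_of_nonneg hc0.le,
      real_inner_smul_left]
    have hi : ⟪v, u⟫ ≤ ‖v‖ * R :=
      (real_inner_le_norm v u).trans (mul_le_mul_of_nonneg_left hu hv.le)
    have h1 : (1 - c) * ⟪v, u⟫ ≤ (1 - c) * (‖v‖ * R) :=
      mul_le_mul_of_nonneg_left hi (by linarith)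
    have h2 : 0 ≤ (1 - c) * (‖v‖ * (‖v‖ - R)) :=
      mul_nonneg (by linarith) (mul_nonneg hv.le (by linarith))
    have h3 : (c * ‖v‖) ^ 2 = c * ‖v‖ * R := by rw [pow_two, hcv]
    have h4 : c * ‖v‖ * ‖v‖ = R * ‖v‖ := by rw [hcv]
    nlinarith

theorem aux_halfspace {d : ℕ} (s y u : EuclideanSpace ℝ (Fin d)) (hs : s ≠ 0) (a : ℝ)
    (ha : a ≤ ⟪s, y - u⟫) :
    ‖y - (max a 0 / ‖s‖ ^ 2) • s - u‖ ^ 2 ≤ ‖y - u‖ ^ 2 := by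
  have hn : 0 < ‖s‖ := norm_pos_iff.mpr hs
  have e : y - (max a 0 / ‖s‖ ^ 2) • s - u = (y - u) - (max a 0 / ‖s‖ ^ 2) • s := by abel
  obtain ⟨c, hc⟩ : ∃ c, c = max a 0 / ‖s‖ ^ 2 := ⟨_, rfl⟩
  have hm : c * ‖s‖ ^ 2 = max a 0 := by rw [hc]; field_simp
  have hc0 : 0 ≤ c := by rw [hc]; positivity
  rw [e, ← hc, norm_sub_sq_real, norm_smul, real_inner_smul_right, real_inner_comm,
    Real.norm_of_nonneg hc0]
  have h1 : c * a ≤ c * ⟪s, y - u⟫ := mul_le_mul_of_nonneg_left ha hc0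
  have h2 : c * max a 0 = c * a := by
    rcases le_total a 0 with h | h
    · have : c = 0 := by rw [hc, max_eq_right h, zero_div]
      rw [this]; ring
    · rw [max_eq_left h]
  have h3 : (c * ‖s‖) ^ 2 = c * max a 0 := by rw [← hm]; ring
  have h4 : 0 ≤ c * max a 0 := by positivity
  nlinarith

theorem aux_grad {d : ℕ} (f : EuclideanSpace ℝ (Fin d) → ℝ) (hf : ConvexOn ℝ Set.univ f)
    (hd : Differentiable ℝ f) (x z : EuclideanSpace ℝ (Fin d)) :
    f x + ⟪gradient f x, z - x⟫ ≤ f z := by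
  have hline : HasDerivAt (fun t : ℝ => f (AffineMap.lineMap x z t)) ⟪gradient f x, z - x⟫ 0 := by
    have h1 : HasFDerivAt f (InnerProductSpace.toDual ℝ _ (gradient f x))
        (AffineMap.lineMap x z (0 : ℝ)) := by
      rw [AffineMap.lineMap_apply_zero]
      exact (hd x).hasGradientAt.hasFDerivAt
    have h2 : HasDerivAt (fun t : ℝ => AffineMap.lineMap x z t) (z - x) (0 : ℝ) :=
      AffineMap.hasDerivAt_lineMap
    exact h1.comp_hasDerivAt (0 : ℝ) h2
  have hc : ConvexOn ℝ Set.univ (fun t : ℝ => f (AffineMap.lineMap x z t)) := by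
    exact hf.comp_affineMap (AffineMap.lineMap x z : ℝ →ᵃ[ℝ] _)
  have := hc.le_slope_of_hasDerivAt (Set.mem_univ 0) (Set.mem_univ 1) one_pos hline
  simp only [slope_def_field, AffineMap.lineMap_apply_zero, AffineMap.lineMap_apply_one,
    sub_zero, div_one] at this
  linarith

theorem aux_subgrad {d : ℕ} (g : EuclideanSpace ℝ (Fin d) → ℝ) (hg : ConvexOn ℝ Set.univ g)
    {ε : ℝ} (hne : ∃ z, g z = -ε) (w : EuclideanSpace ℝ (Fin d)) (hw : -ε < g w) :
    ∃ z, ∃ l : ℝ, 0 ≤ l ∧ g z = -ε ∧ IsSubgradAt g z (l • (w - z)) := by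
  have hcont : Continuous g := by
    have := hg.continuousOn isOpen_univ
    exact continuousOn_univ.mp this
  have hclosed : IsClosed {u | g u ≤ -ε} := isClosed_le hcont continuous_const
  have hconv : Convex ℝ {u | g u ≤ -ε} := by simpa using hg.convex_le (-ε)
  obtain ⟨z, hzK, hz⟩ := exists_norm_eq_iInf_of_complete_convex
    (K := {u | g u ≤ -ε}) ⟨hne.choose, hne.choose_spec.le⟩ hclosed.isComplete hconv w
  rw [norm_eq_iInf_iff_real_inner_le_zero hconv hzK] at hz
  have hzK' : g z ≤ -ε := hzK
  have hwz : w - z ≠ 0 := by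
    intro h
    rw [sub_eq_zero.mp h] at hw
    linarith
  have hvpos : 0 < ⟪w - z, w - z⟫ := real_inner_self_pos.mpr hwz
  have hpos : ∀ u, 0 < ⟪w - z, u - z⟫ → -ε < g u := by
    intro u hu
    by_contra! h
    exact absurd (hz u h) (not_le.mpr hu)
  have hnn : ∀ u, 0 ≤ ⟪w - z, u - z⟫ → -ε ≤ g u := by
    intro u hu
    have ht : Filter.Tendsto (fun t : ℝ => g (u + t • (w - z))) (nhdsWithin 0 (Set.Ioi 0))
        (nhds (g u)) := by
      have : Continuous (fun t : ℝ => g (u + t • (w - z))) := by fun_prop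
      have h := (this.tendsto 0).mono_left (nhdsWithin_le_nhds (s := Set.Ioi (0 : ℝ)))
      simpa using h
    refine ge_of_tendsto ht ?_
    filter_upwards [self_mem_nhdsWithin] with t ht
    apply le_of_lt
    apply hpos
    have e : u + t • (w - z) - z = (u - z) + t • (w - z) := by abel
    rw [e, inner_add_right, real_inner_smul_right]
    have := mul_pos (show 0 < t from ht) hvpos
    linarith
  have hgz : g z = -ε := le_antisymm hzK' (hnn z (by simp))
  let S : Set ℝ := {r | ∃ u, 0 < ⟪w - z, u - z⟫ ∧ r = (g u + ε) / ⟪w - z, u - z⟫}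
  have hS0 : S.Nonempty := ⟨_, w, hvpos, rfl⟩
  have hSb : ∀ r ∈ S, 0 ≤ r := by
    rintro r ⟨u, hu, rfl⟩
    have := hpos u hu
    exact div_nonneg (by linarith) hu.le
  have hBdd : BddBelow S := ⟨0, hSb⟩
  refine ⟨z, sInf S, le_csInf hS0 hSb, hgz, ?_⟩
  intro u
  rw [real_inner_smul_left, hgz]
  rcases lt_trichotomy ⟪w - z, u - z⟫ 0 with h | h | h
  · have key : -(g u + ε) / -⟪w - z, u - z⟫ ≤ sInf S := by
      refine le_csInf hS0 ?_
      rintro r ⟨u2, h2, rfl⟩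
      obtain ⟨p, hp⟩ : ∃ p, p = -⟪w - z, u - z⟫ := ⟨_, rfl⟩
      obtain ⟨q, hq⟩ : ∃ q, q = ⟪w - z, u2 - z⟫ := ⟨_, rfl⟩
      have hp0 : 0 < p := by linarith
      rw [← hq] at h2
      rw [← hp, ← hq, div_le_div_iff₀ hp0 h2]
      have hpq : 0 < p + q := by linarith
      have hsum : q / (p + q) + p / (p + q) = 1 := by field_simp; ring
      have hc := hg.2 (Set.mem_univ u) (Set.mem_univ u2)
        (show 0 ≤ q / (p + q) by positivity) (show 0 ≤ p / (p + q) by positivity) hsum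
      have hin : -ε ≤ g ((q / (p + q)) • u + (p / (p + q)) • u2) := by
        apply hnn
        have e : (q / (p + q)) • u + (p / (p + q)) • u2 - z
            = (q / (p + q)) • (u - z) + (p / (p + q)) • (u2 - z) := by
          have : z = (q / (p + q) + p / (p + q)) • z := by rw [hsum, one_smul]
          nth_rewrite 1 [this]
          module
        rw [e, inner_add_right, real_inner_smul_right, real_inner_smul_right, ← hq,
          show ⟪w - z, u - z⟫ = -p by linarith]
        apply le_of_eq
        ring
      have h3 := hin.trans hc
      simp only [smul_eq_mul] at h3
      have h4 : q / (p + q) * g u + p / (p + q) * g u2 = (q * g u + p * g u2) / (p + q) := by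
        ring
      rw [h4, le_div_iff₀ hpq] at h3
      nlinarith
    rw [div_le_iff₀ (by linarith)] at key
    linarith
  · rw [h, mul_zero, add_zero]
    exact hnn u h.ge
  · have : sInf S ≤ (g u + ε) / ⟪w - z, u - z⟫ := csInf_le hBdd ⟨u, h, rfl⟩
    rw [le_div_iff₀ h] at this
    linarith

theorem aux_tight {d : ℕ} (g : EuclideanSpace ℝ (Fin d) → ℝ) (hg : ConvexOn ℝ Set.univ g)
    {ε σ ρ : ℝ} (hσ : 0 < σ) (hρ : 0 < ρ) (hρε : ρ ≤ ε) (hne : ∃ z, g z = -ε)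
    (hA4 : ∀ z : EuclideanSpace ℝ (Fin d), g z = -ε → ∀ sz, IsSubgradAt g z sz → σ ≤ ‖sz‖)
    (w : EuclideanSpace ℝ (Fin d)) (hw : g w ≤ 0) :
    ∃ u, g u ≤ -ρ ∧ ‖u - w‖ ≤ ρ / σ := by
  by_cases h : g w ≤ -ρ
  · exact ⟨w, h, by simp; positivity⟩
  push Not at h
  obtain ⟨z, l, hl, hgz, hsub⟩ := aux_subgrad g hg hne w (by linarith)
  have h1 := hA4 z hgz _ hsub
  rw [norm_smul, Real.norm_of_nonneg hl] at h1
  have h2 := hsub w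
  rw [real_inner_smul_left, real_inner_self_eq_norm_sq, hgz] at h2
  have h3 : σ * ‖w - z‖ ≤ g w + ε := by
    have := mul_le_mul_of_nonneg_right h1 (norm_nonneg (w - z))
    nlinarith
  have hD : 0 < g w + ε := by linarith
  obtain ⟨θ, hθ⟩ : ∃ θ, θ = (g w + ρ) / (g w + ε) := ⟨_, rfl⟩
  have hθm : θ * (g w + ε) = g w + ρ := by rw [hθ]; field_simp
  have hθ0 : 0 ≤ θ := by rw [hθ]; exact div_nonneg (by linarith) hD.le
  have hθ1 : θ ≤ 1 := by rw [hθ, div_le_one hD]; linarith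
  refine ⟨(1 - θ) • w + θ • z, ?_, ?_⟩
  · have hc := hg.2 (Set.mem_univ w) (Set.mem_univ z)
      (show 0 ≤ 1 - θ by linarith) hθ0 (by ring)
    simp only [smul_eq_mul, hgz] at hc
    linarith
  · have e : (1 - θ) • w + θ • z - w = (-θ) • (w - z) := by module
    rw [e, norm_smul, norm_neg, Real.norm_of_nonneg hθ0, le_div_iff₀ hσ]
    have := mul_le_mul_of_nonneg_left h3 hθ0
    linarith

theorem stmt3 {d T : ℕ} (hT : 1 ≤ T)
    {R Gf Gg ε σ η ρ α : ℝ}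
    (g : EuclideanSpace ℝ (Fin d) → ℝ)
    (f : ℕ → EuclideanSpace ℝ (Fin d) → ℝ)
    (x y s : ℕ → EuclideanSpace ℝ (Fin d))
    (hR : 0 < R) (hGf : 0 < Gf) (hGg : 0 < Gg)
    (hgconv : ConvexOn ℝ Set.univ g)
    (hA1 : {z : EuclideanSpace ℝ (Fin d) | g z ≤ 0} ⊆ Metric.closedBall 0 R)
    (hfconv : ∀ t ∈ Finset.Icc 1 T, ConvexOn ℝ Set.univ (f t))
    (hfdiff : ∀ t ∈ Finset.Icc 1 T, Differentiable ℝ (f t))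
    (hA2 : ∀ t ∈ Finset.Icc 1 T, ∀ z ∈ Metric.closedBall (0 : EuclideanSpace ℝ (Fin d)) R,
      ‖gradient (f t) z‖ ≤ Gf)
    (hA3 : ∀ z ∈ Metric.closedBall (0 : EuclideanSpace ℝ (Fin d)) R,
      ∀ sz, IsSubgradAt g z sz → ‖sz‖ ≤ Gg)
    (hσ : 0 < σ) (hε : 0 < ε) (hσGg : σ ≤ Gg)
    (hA4ne : ∃ z, g z = -ε)
    (hA4 : ∀ z : EuclideanSpace ℝ (Fin d), g z = -ε → ∀ sz, IsSubgradAt g z sz → σ ≤ ‖sz‖)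
    (hα : 0 < α) (hαε : α ≤ ε)
    (hx1g : g (x 1) ≤ -α)
    (hρdef : ρ = α / Real.sqrt T)
    (hηdef : η = (1 - Real.sqrt (1 - σ ^ 2 / Gg ^ 2)) * ρ / (Gf * Gg))
    (hs : ∀ t ∈ Finset.Icc 1 T, IsSubgradAt g (x t) (s t))
    (hy : ∀ t ∈ Finset.Icc 1 T, y t = x t - η • gradient (f t) (x t))
    (hupd : ∀ t ∈ Finset.Icc 1 T,
      x (t + 1) = if s t ≠ 0 then
          projBall R (y t - ((max (g (x t) + ⟪s t, y t - x t⟫ + ρ) 0) / ‖s t‖ ^ 2) • s t)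
        else projBall R (y t))
    :
    ∀ xstar : EuclideanSpace ℝ (Fin d), g xstar ≤ 0 →
      ∑ t ∈ Finset.Icc 1 T, (f t (x t) - f t xstar) ≤
        (2 * Gf * Gg * R ^ 2 / ((1 - Real.sqrt (1 - σ ^ 2 / Gg ^ 2)) * α) +
          Gf * (1 - Real.sqrt (1 - σ ^ 2 / Gg ^ 2)) * α / (2 * Gg) +
          Gf * α / σ) * Real.sqrt T := by
  intro xstar hxs
  obtain ⟨ξ, hξ⟩ : ∃ ξ, ξ = 1 - Real.sqrt (1 - σ ^ 2 / Gg ^ 2) := ⟨_, rfl⟩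
  rw [← hξ] at hηdef ⊢
  have hξ0 : 0 < ξ := by
    have h1 : 0 < σ ^ 2 / Gg ^ 2 := by positivity
    have : Real.sqrt (1 - σ ^ 2 / Gg ^ 2) < 1 := by
      rw [Real.sqrt_lt' one_pos]; linarith
    linarith
  have hT' : (1 : ℝ) ≤ T := by exact_mod_cast hT
  obtain ⟨q, hq⟩ : ∃ q, q = Real.sqrt T := ⟨_, rfl⟩
  have hq1 : 1 ≤ q := by rw [hq]; exact Real.one_le_sqrt.mpr hT'
  have hqq : q ^ 2 = T := by rw [hq]; exact Real.sq_sqrt (by linarith)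
  rw [← hq] at hρdef ⊢
  have hq0 : 0 < q := by linarith
  have hρ0 : 0 < ρ := by rw [hρdef]; positivity
  have hρα : ρ ≤ α := by rw [hρdef]; exact div_le_self hα.le hq1
  have hη0 : 0 < η := by rw [hηdef]; positivity
  obtain ⟨u, hgu, hudist⟩ := aux_tight g hgconv hσ hρ0 (hρα.trans hαε) hA4ne hA4 xstar hxs
  have hball : ∀ v, g v ≤ 0 → ‖v‖ ≤ R := fun v hv => by simpa using hA1 hv
  have huR : ‖u‖ ≤ R := hball u (by linarith)
  have hxR : ∀ t ∈ Finset.Icc 1 (T + 1), ‖x t‖ ≤ R := by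
    intro t ht
    rw [Finset.mem_Icc] at ht
    rcases Nat.lt_or_ge 1 t with h | h
    · obtain ⟨k, rfl⟩ : ∃ k, t = k + 1 := ⟨t - 1, by omega⟩
      rw [hupd k (Finset.mem_Icc.mpr (by omega))]
      split_ifs <;> exact aux_projBall_mem hR _
    · have : t = 1 := by omega
      subst this
      exact hball _ (by linarith)
  have hstep : ∀ t ∈ Finset.Icc 1 T, f t (x t) - f t xstar ≤
      (‖x t - u‖ ^ 2 - ‖x (t + 1) - u‖ ^ 2) / (2 * η) + (η * Gf ^ 2 / 2 + Gf * (ρ / σ)) := by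
    intro t ht
    have htm := Finset.mem_Icc.mp ht
    have hxt : ‖x t‖ ≤ R := hxR t (Finset.mem_Icc.mpr (by omega))
    have hG1 := hA2 t ht (x t) (by simpa using hxt)
    have hG2 := hA2 t ht u (by simpa using huR)
    have hc1 := aux_grad (f t) (hfconv t ht) (hfdiff t ht) (x t) u
    have hc2 := aux_grad (f t) (hfconv t ht) (hfdiff t ht) u xstar
    have hb : f t u - f t xstar ≤ Gf * (ρ / σ) := by
      have h1 := real_inner_le_norm (gradient (f t) u) (u - xstar)
      have h2 : ⟪gradient (f t) u, xstar - u⟫ = -⟪gradient (f t) u, u - xstar⟫ := by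
        rw [← inner_neg_right, neg_sub]
      have h3 := mul_le_mul hG2 hudist (norm_nonneg _) hGf.le
      linarith
    have hdist : ‖x (t + 1) - u‖ ^ 2 ≤ ‖y t - u‖ ^ 2 := by
      rw [hupd t ht]
      split_ifs with h
      · refine (aux_projBall_nonexp hR _ u huR).trans ?_
        refine aux_halfspace (s t) (y t) u h _ ?_
        have h1 := hs t ht u
        have h2 : ⟪s t, y t - u⟫ = ⟪s t, y t - x t⟫ - ⟪s t, u - x t⟫ := by
          rw [← inner_sub_right]; congr 1; abel
        linarith
      · exact aux_projBall_nonexp hR _ u huR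
    have hexp : ‖y t - u‖ ^ 2 = ‖x t - u‖ ^ 2 + 2 * η * ⟪gradient (f t) (x t), u - x t⟫
        + η ^ 2 * ‖gradient (f t) (x t)‖ ^ 2 := by
      have e : y t - u = (x t - u) - η • gradient (f t) (x t) := by rw [hy t ht]; abel
      have e2 : ⟪gradient (f t) (x t), u - x t⟫ = -⟪gradient (f t) (x t), x t - u⟫ := by
        rw [← inner_neg_right, neg_sub]
      rw [e, norm_sub_sq_real, norm_smul, real_inner_smul_right, real_inner_comm,
        Real.norm_of_nonneg hη0.le, e2]
      ring
    have hG1s : ‖gradient (f t) (x t)‖ ^ 2 ≤ Gf ^ 2 := by gcongr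
    have ha : f t (x t) - f t u ≤
        (‖x t - u‖ ^ 2 - ‖x (t + 1) - u‖ ^ 2) / (2 * η) + η * Gf ^ 2 / 2 := by
      have h5 : (f t (x t) - f t u - η * Gf ^ 2 / 2) * (2 * η) ≤
          ‖x t - u‖ ^ 2 - ‖x (t + 1) - u‖ ^ 2 := by
        have h6 := mul_le_mul_of_nonneg_left hG1s (sq_nonneg η)
        have h7 : (f t (x t) - f t u) * (2 * η)
            ≤ -⟪gradient (f t) (x t), u - x t⟫ * (2 * η) :=
          mul_le_mul_of_nonneg_right (by linarith) (by linarith)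
        nlinarith
      have := (le_div_iff₀ (by linarith : 0 < 2 * η)).mpr h5
      linarith
    linarith
  refine (Finset.sum_le_sum hstep).trans ?_
  rw [Finset.sum_add_distrib, ← Finset.sum_div, Finset.sum_const, Nat.card_Icc, nsmul_eq_mul]
  have htel : ∑ t ∈ Finset.Icc 1 T, (‖x t - u‖ ^ 2 - ‖x (t + 1) - u‖ ^ 2)
      = ‖x 1 - u‖ ^ 2 - ‖x (T + 1) - u‖ ^ 2 := by
    clear * - 
    induction T with
    | zero => simp
    | succ n ih => rw [Finset.sum_Icc_succ_top (by omega), ih]; ring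
  rw [htel]
  have hx1u : ‖x 1 - u‖ ≤ 2 * R := by
    have := norm_sub_le (x 1) u
    have := hxR 1 (Finset.mem_Icc.mpr (by omega))
    linarith
  have h8 : ‖x 1 - u‖ ^ 2 - ‖x (T + 1) - u‖ ^ 2 ≤ 4 * R ^ 2 := by
    have h9 : ‖x 1 - u‖ ^ 2 ≤ (2 * R) ^ 2 := by gcongr
    nlinarith [sq_nonneg ‖x (T + 1) - u‖]
  have h10 : (‖x 1 - u‖ ^ 2 - ‖x (T + 1) - u‖ ^ 2) / (2 * η) ≤ 4 * R ^ 2 / (2 * η) := by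
    gcongr
  refine (add_le_add_left h10 _).trans (le_of_eq ?_)
  rw [Nat.add_sub_cancel, ← hqq, hηdef, hρdef]
  field_simp
  ring
end

section
/- Under (A1)–(A4), suppose T ≥ 1, x_1 ∈ RB, and the algorithm is run with parameters η = ξ·ε/(2·G_f·G_g·√T) and ρ = ε/√T. Then the iterates satisfy g(x_t) ≤ 0 for every t ∈ {1,…,T} with t ≥ 1 + (2·G_g²/σ²)·log(4·G_g·R·√T/ε). -/
open scoped RealInnerProductSpace Classical

theorem aux_proj {d : ℕ} (g : EuclideanSpace ℝ (Fin d) → ℝ) (hg : ConvexOn ℝ Set.univ g)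
    (c : ℝ) (hne : ∃ z, g z ≤ c) (x : EuclideanSpace ℝ (Fin d)) :
    ∃ q, g q ≤ c ∧ (∀ w, g w ≤ c → ⟪x - q, w - q⟫ ≤ 0) ∧ (∀ w, g w ≤ c → ‖x - q‖ ≤ ‖x - w‖) := by
  have hcont : Continuous g := by
    have := hg.continuousOn isOpen_univ
    exact continuousOn_univ.mp this
  have hcl : IsClosed {z | g z ≤ c} := isClosed_le hcont continuous_const
  have hcv : Convex ℝ {z | g z ≤ c} := by
    have := hg.convex_le c
    simpa using this
  obtain ⟨q, hq, hq2⟩ := exists_norm_eq_iInf_of_complete_convex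
    (show Set.Nonempty {z | g z ≤ c} from hne) hcl.isComplete hcv x
  have h3 := (norm_eq_iInf_iff_real_inner_le_zero hcv hq).1 hq2
  refine ⟨q, hq, fun w hw => h3 w hw, fun w hw => ?_⟩
  have h4 := h3 w hw
  have h5 : ‖x - w‖ ^ 2 = ‖x - q‖ ^ 2 - 2 * ⟪x - q, w - q⟫ + ‖w - q‖ ^ 2 := by
    rw [← norm_sub_sq_real]; congr 2; abel
  have : ‖x - q‖ ^ 2 ≤ ‖x - w‖ ^ 2 := by nlinarith [sq_nonneg ‖w - q‖]
  exact le_of_sq_le_sq this (norm_nonneg _)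

theorem aux_err0 {d : ℕ} (g : EuclideanSpace ℝ (Fin d) → ℝ) (hg : ConvexOn ℝ Set.univ g)
    (ε σ : ℝ) (hne : ∃ z, g z = -ε)
    (hA4 : ∀ z : EuclideanSpace ℝ (Fin d), g z = -ε → ∀ sz, IsSubgradAt g z sz → σ ≤ ‖sz‖)
    (x : EuclideanSpace ℝ (Fin d)) (hx : -ε < g x) :
    ∃ q, g q ≤ -ε ∧ σ * ‖x - q‖ ≤ g x + ε := by
  obtain ⟨q, hq, hin, -⟩ := aux_proj g hg (-ε) (hne.imp fun z hz => hz.le) x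
  refine ⟨q, hq, ?_⟩
  have hcont : Continuous g := continuousOn_univ.mp (hg.continuousOn isOpen_univ)
  obtain ⟨v, hv⟩ : ∃ v, v = x - q := ⟨_, rfl⟩
  rw [← hv] at hin ⊢
  have hvne : v ≠ 0 := by
    intro h
    have : x = q := by rw [h] at hv; exact (sub_eq_zero.mp hv.symm)
    rw [this] at hx; linarith
  have hvpos : 0 < ‖v‖ := norm_pos_iff.mpr hvne
  have hneg : ∀ z, g z < -ε → ⟪v, z - q⟫ < 0 := by
    intro z hz
    have hc : Continuous fun τ : ℝ => g (z + τ • v) := by fun_prop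
    have h0 : ∀ᶠ τ : ℝ in nhds 0, g (z + τ • v) < -ε :=
      hc.continuousAt.eventually_lt continuousAt_const (by simpa using hz)
    have h1 : ∀ᶠ τ : ℝ in nhdsWithin 0 (Set.Ioi 0), g (z + τ • v) < -ε :=
      h0.filter_mono nhdsWithin_le_nhds
    obtain ⟨τ, hτ, hτ0⟩ := (h1.and self_mem_nhdsWithin).exists
    have h2 := hin _ hτ.le
    have h3 : ⟪v, z + τ • v - q⟫ = ⟪v, z - q⟫ + τ * ‖v‖ ^ 2 := by
      rw [show z + τ • v - q = (z - q) + τ • v by abel, inner_add_right, inner_smul_right,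
        real_inner_self_eq_norm_sq]
    have h4 : 0 < τ * ‖v‖ ^ 2 := mul_pos hτ0 (by positivity)
    linarith
  have hqe : g q = -ε := by
    rcases hq.lt_or_eq with h | h
    · have := hneg q h; simp at this
    · exact h
  have hpos : ∀ z, 0 ≤ ⟪v, z - q⟫ → -ε ≤ g z := fun z hz => by
    by_contra h
    have := hneg z (not_le.mp h); linarith
  let S : Set ℝ := {r | ∃ z, 0 < ⟪v, z - q⟫ ∧ r = (g z + ε) / ⟪v, z - q⟫}
  have hSb : ∀ r ∈ S, 0 ≤ r := by
    rintro r ⟨z, hz, rfl⟩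
    have := hpos z hz.le
    exact div_nonneg (by linarith) hz.le
  have hxS : (0:ℝ) < ⟪v, x - q⟫ := by
    rw [← hv, real_inner_self_eq_norm_sq]; positivity
  have hSne : S.Nonempty := ⟨_, x, hxS, rfl⟩
  have hbdd : BddBelow S := ⟨0, hSb⟩
  have hl0 : 0 ≤ sInf S := le_csInf hSne hSb
  have hsub : IsSubgradAt g q (sInf S • v) := by
    intro z
    rw [hqe, real_inner_smul_left]
    rcases lt_trichotomy 0 ⟪v, z - q⟫ with h | h | h
    · have h1 : sInf S ≤ (g z + ε) / ⟪v, z - q⟫ := csInf_le hbdd ⟨z, h, rfl⟩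
      rw [le_div_iff₀ h] at h1
      linarith
    · have := hpos z h.le
      rw [← h]; linarith
    · have h1 : (g z + ε) / ⟪v, z - q⟫ ≤ sInf S := by
        apply le_csInf hSne
        rintro r ⟨w, hw, rfl⟩
        obtain ⟨a, ha⟩ : ∃ a, a = ⟪v, z - q⟫ := ⟨_, rfl⟩
        obtain ⟨b, hb⟩ : ∃ b, b = ⟪v, w - q⟫ := ⟨_, rfl⟩
        rw [← ha] at h ⊢
        rw [← hb] at hw ⊢
        have hd : 0 < b - a := by linarith
        have hsum : b / (b - a) + (-a) / (b - a) = 1 := by field_simp; ring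
        have hc := hg.2 (Set.mem_univ z) (Set.mem_univ w)
          (show 0 ≤ b / (b - a) by positivity)
          (show 0 ≤ (-a) / (b - a) from div_nonneg (by linarith) hd.le) hsum
        have hi : ⟪v, ((b / (b - a)) • z + ((-a) / (b - a)) • w) - q⟫ = 0 := by
          have : ((b / (b - a)) • z + ((-a) / (b - a)) • w) - q
              = (b / (b - a)) • (z - q) + ((-a) / (b - a)) • (w - q) := by
            have : q = (b / (b - a) + (-a) / (b - a)) • q := by rw [hsum, one_smul]
            nth_rw 1 [this]
            module
          rw [this, inner_add_right, inner_smul_right, inner_smul_right, ← ha, ← hb]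
          field_simp; ring
        have h2 := (hpos _ hi.ge).trans hc
        simp only [smul_eq_mul] at h2
        have h3 : b / (b - a) * g z + -a / (b - a) * g w = (b * g z - a * g w) / (b - a) := by
          field_simp; ring
        rw [h3, le_div_iff₀ hd] at h2
        rw [div_le_iff_of_neg h, div_mul_eq_mul_div, div_le_iff₀ hw]
        nlinarith
      rw [div_le_iff_of_neg h] at h1
      linarith
  have h1 := hA4 q hqe _ hsub
  rw [norm_smul, Real.norm_of_nonneg hl0] at h1
  have h2 := hsub x
  rw [hqe, real_inner_smul_left, ← hv, real_inner_self_eq_norm_sq] at h2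
  nlinarith

theorem aux_err {d : ℕ} (g : EuclideanSpace ℝ (Fin d) → ℝ) (hg : ConvexOn ℝ Set.univ g)
    (ε σ ρ : ℝ) (hρ : ρ ≤ ε) (hne : ∃ z, g z = -ε)
    (hA4 : ∀ z : EuclideanSpace ℝ (Fin d), g z = -ε → ∀ sz, IsSubgradAt g z sz → σ ≤ ‖sz‖)
    (x : EuclideanSpace ℝ (Fin d)) (hx : -ρ < g x) :
    ∃ p, g p ≤ -ρ ∧ σ * ‖x - p‖ ≤ g x + ρ := by
  obtain ⟨q, hq, hb⟩ := aux_err0 g hg ε σ hne hA4 x (by linarith)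
  have hE : 0 < g x + ε := by linarith
  have hsum : (g x + ρ) / (g x + ε) + (ε - ρ) / (g x + ε) = 1 := by field_simp; ring
  have h1 : 0 ≤ (g x + ρ) / (g x + ε) := div_nonneg (by linarith) hE.le
  have h2 : 0 ≤ (ε - ρ) / (g x + ε) := div_nonneg (by linarith) hE.le
  have hc := hg.2 (Set.mem_univ q) (Set.mem_univ x) h1 h2 hsum
  refine ⟨_, hc.trans ?_, ?_⟩
  · simp only [smul_eq_mul]
    have : (g x + ρ) / (g x + ε) * (-ε) + (ε - ρ) / (g x + ε) * g x = -ρ := by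
      field_simp; ring
    nlinarith
  · have : x - (((g x + ρ) / (g x + ε)) • q + ((ε - ρ) / (g x + ε)) • x)
        = ((g x + ρ) / (g x + ε)) • (x - q) := by
      have h : x = ((g x + ρ) / (g x + ε) + (ε - ρ) / (g x + ε)) • x := by rw [hsum, one_smul]
      generalize (g x + ρ) / (g x + ε) = a at *
      generalize (ε - ρ) / (g x + ε) = b at *
      have hb : b = 1 - a := by linarith
      subst hb
      module
    rw [this, norm_smul, Real.norm_of_nonneg h1]
    calc σ * ((g x + ρ) / (g x + ε) * ‖x - q‖) = (g x + ρ) / (g x + ε) * (σ * ‖x - q‖) := by ring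
      _ ≤ (g x + ρ) / (g x + ε) * (g x + ε) := by gcongr
      _ = g x + ρ := by field_simp

theorem aux_ball {d : ℕ} (R : ℝ) (hR : 0 < R) (v p : EuclideanSpace ℝ (Fin d)) (hp : ‖p‖ ≤ R) :
    ‖projBall R v‖ ≤ R ∧ ‖projBall R v - p‖ ≤ ‖v - p‖ := by
  unfold projBall
  rcases le_total ‖v‖ R with h | h
  · rw [max_eq_left h, div_self hR.ne', one_smul]
    exact ⟨h, le_rfl⟩
  · rw [max_eq_right h]
    have hv : 0 < ‖v‖ := hR.trans_le h
    have hk0 : 0 ≤ R / ‖v‖ := by positivity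
    have hk1 : R / ‖v‖ ≤ 1 := (div_le_one hv).2 h
    have hk : R / ‖v‖ * ‖v‖ = R := by field_simp
    generalize R / ‖v‖ = k at *
    constructor
    · rw [norm_smul, Real.norm_of_nonneg hk0, hk]
    · refine le_of_sq_le_sq ?_ (norm_nonneg _)
      rw [norm_sub_sq_real, norm_sub_sq_real, norm_smul, Real.norm_of_nonneg hk0, hk,
        real_inner_smul_left]
      have h1 : ⟪v, p⟫ ≤ ‖v‖ * R :=
        (real_inner_le_norm v p).trans (by gcongr)
      have h2 : (1 - k) * ⟪v, p⟫ ≤ (1 - k) * (‖v‖ * R) :=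
        mul_le_mul_of_nonneg_left h1 (by linarith)
      have h3 : k * (‖v‖ * R) = R ^ 2 := by rw [← mul_assoc, hk]; ring
      nlinarith [sq_nonneg (‖v‖ - R)]

theorem aux_half {d : ℕ} (x e s p : EuclideanSpace ℝ (Fin d)) (hs : s ≠ 0) (a : ℝ)
    (B : ℝ) (hB : 0 ≤ B)
    (hz : ‖x - (max a 0 / ‖s‖ ^ 2) • s - p‖ ≤ B) :
    ‖x + e - (max (a + ⟪s, e⟫) 0 / ‖s‖ ^ 2) • s - p‖ ≤ B + ‖e‖ := by
  have hn : 0 < ‖s‖ := norm_pos_iff.mpr hs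
  obtain ⟨c, hc⟩ : ∃ c, c = max (a + ⟪s, e⟫) 0 - max a 0 := ⟨_, rfl⟩
  have hcc : c ^ 2 ≤ c * ⟪s, e⟫ := by
    rcases max_cases (a + ⟪s, e⟫) 0 with ⟨h1, h2⟩ | ⟨h1, h2⟩ <;>
    rcases max_cases a 0 with ⟨h3, h4⟩ | ⟨h3, h4⟩ <;> rw [hc, h1, h3] <;> nlinarith
  have hee : ‖e - (c / ‖s‖ ^ 2) • s‖ ≤ ‖e‖ := by
    refine le_of_sq_le_sq ?_ (norm_nonneg _)
    rw [norm_sub_sq_real, inner_smul_right, norm_smul, mul_pow, real_inner_comm,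
      Real.norm_eq_abs, sq_abs]
    have : (c / ‖s‖ ^ 2) ^ 2 * ‖s‖ ^ 2 = c ^ 2 / ‖s‖ ^ 2 := by field_simp
    rw [this]
    have h2 : c ^ 2 / ‖s‖ ^ 2 ≤ c * ⟪s, e⟫ / ‖s‖ ^ 2 := by gcongr
    have h3 : 0 ≤ c ^ 2 / ‖s‖ ^ 2 := by positivity
    have h4 : c / ‖s‖ ^ 2 * ⟪s, e⟫ = c * ⟪s, e⟫ / ‖s‖ ^ 2 := by ring
    rw [h4]; linarith
  have : x + e - (max (a + ⟪s, e⟫) 0 / ‖s‖ ^ 2) • s - p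
      = (x - (max a 0 / ‖s‖ ^ 2) • s - p) + (e - (c / ‖s‖ ^ 2) • s) := by
    rw [hc, sub_div]; module
  rw [this]
  exact (norm_add_le _ _).trans (add_le_add hz hee)

theorem aux_polyak {d : ℕ} (x s p : EuclideanSpace ℝ (Fin d)) (hs : s ≠ 0) (a σ G : ℝ)
    (hσ : 0 < σ) (hG : 0 < G) (hσG : σ ≤ G) (hsG : ‖s‖ ≤ G)
    (h0 : a ≤ 0 → x = p) (h1 : 0 < a → σ * ‖x - p‖ ≤ a) (h2 : a ≤ ⟪s, x - p⟫) :
    ‖x - (max a 0 / ‖s‖ ^ 2) • s - p‖ ≤ √(1 - σ ^ 2 / G ^ 2) * ‖x - p‖ := by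
  have hn : 0 < ‖s‖ := norm_pos_iff.mpr hs
  rcases le_or_gt a 0 with ha | ha
  · rw [h0 ha, max_eq_right ha]; simp
  · rw [max_eq_left ha.le]
    have hγ : 0 ≤ 1 - σ ^ 2 / G ^ 2 := by
      rw [sub_nonneg, div_le_one (by positivity)]; gcongr
    refine le_of_sq_le_sq ?_ (by positivity)
    rw [mul_pow, Real.sq_sqrt hγ, show x - (a / ‖s‖ ^ 2) • s - p = (x - p) - (a / ‖s‖ ^ 2) • s by abel,
      norm_sub_sq_real, inner_smul_right, norm_smul, mul_pow, real_inner_comm,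
      Real.norm_eq_abs, sq_abs]
    have : (a / ‖s‖ ^ 2) ^ 2 * ‖s‖ ^ 2 = a ^ 2 / ‖s‖ ^ 2 := by field_simp
    rw [this]
    have h3 : a / ‖s‖ ^ 2 * a ≤ a / ‖s‖ ^ 2 * ⟪s, x - p⟫ := by gcongr
    have h4 : a / ‖s‖ ^ 2 * a = a ^ 2 / ‖s‖ ^ 2 := by ring
    have h5 : σ ^ 2 / G ^ 2 * ‖x - p‖ ^ 2 ≤ a ^ 2 / ‖s‖ ^ 2 := by
      calc σ ^ 2 / G ^ 2 * ‖x - p‖ ^ 2 = (σ * ‖x - p‖) ^ 2 / G ^ 2 := by ring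
        _ ≤ a ^ 2 / ‖s‖ ^ 2 := by
          have := h1 ha
          gcongr
    linarith

theorem stmt5 {d T : ℕ} (hT : 1 ≤ T)
    {R Gf Gg ε σ η ρ : ℝ}
    (g : EuclideanSpace ℝ (Fin d) → ℝ)
    (f : ℕ → EuclideanSpace ℝ (Fin d) → ℝ)
    (x y s : ℕ → EuclideanSpace ℝ (Fin d))
    (hR : 0 < R) (hGf : 0 < Gf) (hGg : 0 < Gg)
    (hgconv : ConvexOn ℝ Set.univ g)
    (hA1 : {z : EuclideanSpace ℝ (Fin d) | g z ≤ 0} ⊆ Metric.closedBall 0 R)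
    (hfconv : ∀ t ∈ Finset.Icc 1 T, ConvexOn ℝ Set.univ (f t))
    (hfdiff : ∀ t ∈ Finset.Icc 1 T, Differentiable ℝ (f t))
    (hA2 : ∀ t ∈ Finset.Icc 1 T, ∀ z ∈ Metric.closedBall (0 : EuclideanSpace ℝ (Fin d)) R,
      ‖gradient (f t) z‖ ≤ Gf)
    (hA3 : ∀ z ∈ Metric.closedBall (0 : EuclideanSpace ℝ (Fin d)) R,
      ∀ sz, IsSubgradAt g z sz → ‖sz‖ ≤ Gg)
    (hσ : 0 < σ) (hε : 0 < ε) (hσGg : σ ≤ Gg)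
    (hA4ne : ∃ z, g z = -ε)
    (hA4 : ∀ z : EuclideanSpace ℝ (Fin d), g z = -ε → ∀ sz, IsSubgradAt g z sz → σ ≤ ‖sz‖)
    (hx1 : x 1 ∈ Metric.closedBall (0 : EuclideanSpace ℝ (Fin d)) R)
    (hηdef : η = (1 - Real.sqrt (1 - σ ^ 2 / Gg ^ 2)) * ε / (2 * Gf * Gg * Real.sqrt T))
    (hρdef : ρ = ε / Real.sqrt T)
    (hs : ∀ t ∈ Finset.Icc 1 T, IsSubgradAt g (x t) (s t))
    (hy : ∀ t ∈ Finset.Icc 1 T, y t = x t - η • gradient (f t) (x t))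
    (hupd : ∀ t ∈ Finset.Icc 1 T,
      x (t + 1) = if s t ≠ 0 then
          projBall R (y t - ((max (g (x t) + ⟪s t, y t - x t⟫ + ρ) 0) / ‖s t‖ ^ 2) • s t)
        else projBall R (y t))
    :
    ∀ t ∈ Finset.Icc 1 T,
      1 + 2 * Gg ^ 2 / σ ^ 2 * Real.log (4 * Gg * R * Real.sqrt T / ε) ≤ (t : ℝ) →
        g (x t) ≤ 0 := by
  classical
  have hsT : 1 ≤ √(T:ℝ) := by
    rw [Real.one_le_sqrt]; exact_mod_cast hT
  have hsT0 : 0 < √(T:ℝ) := by linarith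
  have hρ0 : 0 < ρ := by rw [hρdef]; positivity
  have hρε : ρ ≤ ε := by rw [hρdef]; exact div_le_self hε.le hsT
  have hγ0 : 0 ≤ 1 - σ ^ 2 / Gg ^ 2 := by
    rw [sub_nonneg, div_le_one (by positivity)]; gcongr
  have hγ1 : 1 - σ ^ 2 / Gg ^ 2 < 1 := by
    have : 0 < σ ^ 2 / Gg ^ 2 := by positivity
    linarith
  obtain ⟨κ, hκ⟩ : ∃ κ, κ = √(1 - σ ^ 2 / Gg ^ 2) := ⟨_, rfl⟩
  have hκ0 : 0 ≤ κ := hκ ▸ Real.sqrt_nonneg _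
  have hκ1 : κ < 1 := by
    rw [hκ, Real.sqrt_lt' one_pos]; simpa using hγ1
  have hκe : κ ≤ Real.exp (-(σ ^ 2 / (2 * Gg ^ 2))) := by
    rw [hκ]
    apply Real.sqrt_le_iff.2 ⟨(Real.exp_pos _).le, ?_⟩
    rw [← Real.exp_nat_mul]
    have := Real.add_one_le_exp (-(σ ^ 2 / Gg ^ 2))
    rw [show ((2:ℕ):ℝ) * -(σ ^ 2 / (2 * Gg ^ 2)) = -(σ ^ 2 / Gg ^ 2) by push_cast; field_simp]
    linarith
  rw [← hκ] at hηdef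
  have hηG : η * Gf = (1 - κ) * (ρ / (2 * Gg)) := by
    rw [hηdef, hρdef]; field_simp
  have hη0 : 0 ≤ η := by
    rw [hηdef]; exact div_nonneg (mul_nonneg (by linarith) hε.le) (by positivity)
  have hneρ : ∃ z, g z ≤ -ρ := hA4ne.imp fun z hz => by linarith
  have hball : ∀ p, g p ≤ -ρ → ‖p‖ ≤ R := fun p hp => by
    have : p ∈ Metric.closedBall (0 : EuclideanSpace ℝ (Fin d)) R := hA1 (by
      show g p ≤ 0
      linarith)
    simpa using this
  have key : ∀ n : ℕ, n + 1 ≤ T → ‖x (n + 1)‖ ≤ R ∧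
      ∃ p, g p ≤ -ρ ∧ ‖x (n + 1) - p‖ ≤ κ ^ n * (2 * R) + ρ / (2 * Gg) := by
    intro n
    induction n with
    | zero =>
      intro _
      have h1 : ‖x 1‖ ≤ R := by simpa using hx1
      refine ⟨by simpa using h1, ?_⟩
      obtain ⟨p, hp⟩ := hneρ
      refine ⟨p, hp, ?_⟩
      have h2 := norm_sub_le (x 1) p
      have h3 := hball p hp
      have h4 : 0 ≤ ρ / (2 * Gg) := by positivity
      simp only [zero_add, pow_zero, one_mul]
      linarith
    | succ n ih =>
      intro hn
      obtain ⟨hxR, p', hp', hp'2⟩ := ih (by omega)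
      have hm : n + 1 ∈ Finset.Icc 1 T := by simp; omega
      have hU := hupd _ hm
      have hY := hy _ hm
      have hS := hs _ hm
      have hxb : x (n + 1) ∈ Metric.closedBall (0 : EuclideanSpace ℝ (Fin d)) R := by simpa using hxR
      have hGr := hA2 _ hm _ hxb
      have hsG := hA3 _ hxb _ hS
      obtain ⟨p, hp, -, hmin⟩ := aux_proj g hgconv (-ρ) hneρ (x (n + 1))
      have hpR := hball p hp
      obtain ⟨e, he⟩ : ∃ e, e = -(η • gradient (f (n + 1)) (x (n + 1))) := ⟨_, rfl⟩
      have heN : ‖e‖ ≤ η * Gf := by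
        rw [he, norm_neg, norm_smul, Real.norm_of_nonneg hη0]; gcongr
      have hYe : y (n + 1) = x (n + 1) + e := by rw [hY, he]; abel
      have hx0 : g (x (n + 1)) + ρ ≤ 0 → x (n + 1) = p := fun h => by
        have := hmin (x (n + 1)) (by linarith)
        rw [sub_self, norm_zero] at this
        exact sub_eq_zero.mp (norm_le_zero_iff.mp this)
      have hstep : ‖x (n + 1 + 1)‖ ≤ R ∧ ‖x (n + 1 + 1) - p‖ ≤ κ * ‖x (n + 1) - p‖ + ‖e‖ := by
        by_cases hs0 : s (n + 1) = 0
        · rw [if_neg (by simpa using hs0)] at hU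
          have hxp : x (n + 1) = p := by
            apply hx0
            obtain ⟨z, hz⟩ := hA4ne
            have := hS z
            rw [hs0, inner_zero_left] at this
            linarith
          have hb := aux_ball R hR (y (n + 1)) p hpR
          rw [← hU] at hb
          refine ⟨hb.1, hb.2.trans ?_⟩
          rw [hYe, hxp]; simp
        · rw [if_pos hs0] at hU
          have hb := aux_ball R hR (y (n + 1) - ((max (g (x (n + 1)) + ⟪s (n + 1), y (n + 1) - x (n + 1)⟫ + ρ) 0) / ‖s (n + 1)‖ ^ 2) • s (n + 1)) p hpR
          rw [← hU] at hb
          refine ⟨hb.1, hb.2.trans ?_⟩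
          rw [hYe, add_sub_cancel_left, show g (x (n + 1)) + ⟪s (n + 1), e⟫ + ρ
            = (g (x (n + 1)) + ρ) + ⟪s (n + 1), e⟫ by ring]
          apply aux_half _ _ _ _ hs0 _ _ (by positivity)
          rw [hκ]
          apply aux_polyak _ _ _ hs0 _ _ _ hσ hGg hσGg hsG hx0
          · intro ha
            obtain ⟨w, hw, hw2⟩ := aux_err g hgconv ε σ ρ hρε hA4ne hA4 (x (n + 1)) (by linarith)
            exact (mul_le_mul_of_nonneg_left (hmin w hw) hσ.le).trans hw2
          · have h := hS p
            rw [← neg_sub (x (n + 1)) p, inner_neg_right] at h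
            linarith
      refine ⟨hstep.1, p, hp, hstep.2.trans ?_⟩
      have h1 := mul_le_mul_of_nonneg_left ((hmin p' hp').trans hp'2) hκ0
      calc κ * ‖x (n + 1) - p‖ + ‖e‖
          ≤ κ * (κ ^ n * (2 * R) + ρ / (2 * Gg)) + (1 - κ) * (ρ / (2 * Gg)) := by
            rw [← hηG]; exact add_le_add h1 heN
        _ = _ := by ring
  intro t ht htl
  obtain ⟨ht1, ht2⟩ := Finset.mem_Icc.mp ht
  obtain ⟨n, rfl⟩ : ∃ n, t = n + 1 := ⟨t - 1, by omega⟩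
  obtain ⟨hxR, p, hp, hpd⟩ := key n ht2
  have hsG := hA3 (x (n + 1)) (by simpa using hxR) _ (hs _ ht)
  have hgp := hs _ ht p
  have hκn : κ ^ n * (2 * R) ≤ ρ / (2 * Gg) := by
    have hL : 0 < 4 * Gg * R * √(T:ℝ) / ε := by positivity
    have h1 : κ ^ n ≤ (4 * Gg * R * √(T:ℝ) / ε)⁻¹ := by
      calc κ ^ n ≤ Real.exp (-(σ ^ 2 / (2 * Gg ^ 2))) ^ n := by gcongr
        _ = Real.exp (n * (-(σ ^ 2 / (2 * Gg ^ 2)))) := by rw [← Real.exp_nat_mul]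
        _ ≤ Real.exp (-Real.log (4 * Gg * R * √(T:ℝ) / ε)) := by
          apply Real.exp_le_exp.2
          push_cast at htl
          have h2 : 2 * Gg ^ 2 / σ ^ 2 * Real.log (4 * Gg * R * √(T:ℝ) / ε) ≤ n := by linarith
          have h3 := mul_le_mul_of_nonneg_left h2 (show 0 ≤ σ ^ 2 / (2 * Gg ^ 2) by positivity)
          have h4 : σ ^ 2 / (2 * Gg ^ 2) * (2 * Gg ^ 2 / σ ^ 2 * Real.log (4 * Gg * R * √(T:ℝ) / ε))
            = Real.log (4 * Gg * R * √(T:ℝ) / ε) := by field_simp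
          linarith
        _ = _ := by rw [Real.exp_neg, Real.exp_log hL]
    calc κ ^ n * (2 * R) ≤ (4 * Gg * R * √(T:ℝ) / ε)⁻¹ * (2 * R) := by gcongr
      _ = ρ / (2 * Gg) := by rw [hρdef]; field_simp; norm_num
  have hd : ‖x (n + 1) - p‖ ≤ ρ / Gg := by
    have : ρ / (2 * Gg) + ρ / (2 * Gg) = ρ / Gg := by field_simp; norm_num
    linarith
  rw [← neg_sub (x (n + 1)) p, inner_neg_right] at hgp
  have h5 : ⟪s (n + 1), x (n + 1) - p⟫ ≤ Gg * (ρ / Gg) :=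
    (real_inner_le_norm _ _).trans (by gcongr)
  rw [mul_div_cancel₀ _ hGg.ne'] at h5
  linarith
end
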